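/- Let K be a field and let T = node([T_1,…,T_n]) be a finite planar reduced rooted tree of arity n ≥ 2. Then, in the free K-module on PRT' (graftings node extended K-multilinearly): x ⧢ T = x·T + T·x + Σ_{i=1}^{n+1} node([T_1,…,T_{i−1}, x, T_i,…,T_n]) + Σ_{i=1}^{n} node([T_1,…,T_{i−1}, x ⧢ T_i, T_{i+1},…,T_n]). -/

import Mathlib

inductive PTree : Type where
  | node : List PTree → PTree

namespace PTree

/-- the single-vertex tree -/
def x : PTree := node []

/-- the number of leaves of a tree -/
def deg : PTree → ℕ
  | node l => max 1 (l.attach.map fun t => deg t.1).sum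
decreasing_by
  have := List.sizeOf_lt_of_mem t.2
  simp; omega

/-- a tree is reduced if no vertex has arity 1 -/
inductive Reduced : PTree → Prop where
  | node (l : List PTree) (hlen : l.length ≠ 1) (h : ∀ t ∈ l, Reduced t) :
      Reduced (node l)

/-- the reduction of a tree -/
def red : PTree → PTree
  | node [t] => red t
  | node l => node (l.attach.map fun t => red t.1)
decreasing_by
  · simp; omega
  · have := List.sizeOf_lt_of_mem t.2
    simp; omega

mutual
/-- the spanning subtree `T_I` determined by a set `I ⊆ range (deg T)` of leaf positions
(counted from the left, starting at `0`) -/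
def sub : PTree → Finset ℕ → PTree
  | node l, I => node (subList l I)
/-- auxiliary: the list of spanning subtrees of the children, children without
selected leaves being dropped -/
def subList : List PTree → Finset ℕ → List PTree
  | [], _ => []
  | t :: ts, I =>
      (if (I.filter (· < t.deg)).Nonempty then [sub t (I.filter (· < t.deg))] else [])
        ++ subList ts ((I.filter fun j => t.deg ≤ j).image fun j => j - t.deg)
end

/-- the contraction `T|I`: the reduction of the spanning subtree, `1` (i.e. `none`) if `I = ∅` -/
def contract (T : PTree) (I : Finset ℕ) : Option PTree :=
  if I = ∅ then none else some (red (sub T I))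

end PTree

/-- `PRT'`: finite planar rooted trees together with the empty tree `1 = none` -/
abbrev OT := Option PTree

/-- `deg` on `PRT'` -/
def degO (o : OT) : ℕ := o.elim 0 PTree.deg

/-- membership in `PRT'` = reduced trees together with the empty tree `1` -/
def ROT (o : OT) : Prop := ∀ t, o = some t → t.Reduced

/-- contraction on `PRT'` -/
def contractO : OT → Finset ℕ → OT
  | none, _ => none
  | some t, I => PTree.contract t I

open Classical in
/-- `N_{S,T}(V)` as a finite set of subsets of the set of leaf positions of `V` -/
noncomputable def NFinset (S T V : OT) : Finset (Finset ℕ) :=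
  (Finset.range (degO V)).powerset.filter fun I =>
    contractO V I = S ∧ contractO V (Finset.range (degO V) \ I) = T

/-- `#N_{S,T}(V)` -/
noncomputable def Ncount (S T V : OT) : ℕ := (NFinset S T V).card

/-- the free `K`-module on `PRT'` (realized inside the free module on all of `Option PTree`;
the elements of the free module on `PRT'` are those whose support satisfies `ROT`) -/
abbrev AMod (K : Type) [Field K] := OT →₀ K

/-- `f` belongs to the free `K`-module on `PRT'` -/
def suppRed (K : Type) [Field K] (f : AMod K) : Prop := ∀ t ∈ f.support, ROT t

/-- the planar shuffle product `S ⧢ T = Σ_{V ∈ PRT'} #N_{S,T}(V)·V` of two monomials -/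
noncomputable def shuffleM (K : Type) [Field K] (S T : OT) : AMod K :=
  ∑ᶠ (V : OT) (_ : ROT V), Finsupp.single V ((Ncount S T V : K))

/-- the `K`-bilinear extension of the planar shuffle product -/
noncomputable def shuffleF (K : Type) [Field K] (f g : AMod K) : AMod K :=
  f.sum fun S a => g.sum fun T b => (a * b) • shuffleM K S T

/-- tensor-like product of a list of module elements, as a finitely supported
function on lists of basis elements -/
noncomputable def listProd (K : Type) [Field K] {σ : Type} : List (σ →₀ K) → (List σ →₀ K)
  | [] => Finsupp.single [] 1
  | f :: fs => f.sum fun t a => (listProd K fs).sum fun ts b => Finsupp.single (t :: ts) (a * b)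

/-- the `K`-multilinear extension of an operation on basis elements -/
noncomputable def mulExt (K : Type) [Field K] {σ τ : Type} (op : List σ → τ)
    (l : List (σ →₀ K)) : τ →₀ K :=
  (listProd K l).sum fun ts c => Finsupp.single (op ts) c

/-- `gr` : delete all entries equal to `1`, then return `1` if no entry remains,
the unique entry if exactly one remains, and the grafting `node` otherwise -/
def grO (ts : List OT) : OT :=
  match ts.reduceOption with
  | [] => none
  | [t] => some t
  | l => some (PTree.node l)

/-- the `K`-multilinear extension of `gr` -/
noncomputable def grF (K : Type) [Field K] (l : List (AMod K)) : AMod K := mulExt K grO l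

/-- the `K`-multilinear extension of the grafting `node` (junk value `0` on lists
containing the empty tree `1`, which never occurs in its uses here) -/
noncomputable def nodeF (K : Type) [Field K] (l : List (AMod K)) : AMod K :=
  (listProd K l).sum fun ts c =>
    match (ts.mapM (id : Option PTree → Option PTree) : Option (List PTree)) with
    | some l' => Finsupp.single (some (PTree.node l')) c
    | none => 0


namespace PTree

theorem ind {P : PTree → Prop} (h : ∀ l, (∀ t ∈ l, P t) → P (node l)) : ∀ t, P t
  | node l => h l (fun t _ => ind h t)
decreasing_by
  have := List.sizeOf_lt_of_mem (by assumption : t ∈ l)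
  simp; omega

def degs (l : List PTree) : ℕ := (l.map deg).sum

@[simp] theorem degs_nil : degs [] = 0 := rfl
@[simp] theorem degs_cons (t : PTree) (l : List PTree) : degs (t :: l) = t.deg + degs l := by
  simp [degs]
@[simp] theorem degs_append (l l' : List PTree) : degs (l ++ l') = degs l + degs l' := by
  simp [degs]

theorem deg_node (l : List PTree) : deg (node l) = max 1 (degs l) := by
  rw [deg, degs]; simp

theorem deg_pos (t : PTree) : 1 ≤ t.deg := by
  cases t with | node l => rw [deg_node]; exact le_max_left _ _

theorem length_le_degs (l : List PTree) : l.length ≤ degs l := by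
  induction l with
  | nil => simp
  | cons t l ih => have := deg_pos t; simp; omega

theorem deg_x : deg x = 1 := by rw [x, deg_node]; rfl

theorem deg_node' {l : List PTree} (h : l ≠ []) : deg (node l) = degs l := by
  have := length_le_degs l
  have := List.length_pos_iff.2 h
  rw [deg_node]; omega

theorem red_single (t : PTree) : red (node [t]) = red t := by rw [red]

theorem red_node {l : List PTree} (h : l.length ≠ 1) : red (node l) = node (l.map red) := by
  rw [red]
  · simp
  · rintro t rfl; simp at h

theorem reduced_iff (l : List PTree) :
    (node l).Reduced ↔ l.length ≠ 1 ∧ ∀ t ∈ l, Reduced t := by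
  constructor
  · rintro ⟨_, h1, h2⟩; exact ⟨h1, h2⟩
  · rintro ⟨h1, h2⟩; exact ⟨_, h1, h2⟩

theorem red_reduced : ∀ t, (red t).Reduced := by
  apply ind
  intro l ih
  by_cases h : l.length = 1
  · obtain ⟨t, rfl⟩ := List.length_eq_one_iff.1 h
    rw [red_single]; exact ih t (by simp)
  · rw [red_node h, reduced_iff]
    refine ⟨by simpa using h, ?_⟩
    simpa using ih

theorem red_eq : ∀ t, t.Reduced → red t = t := by
  refine ind ?_
  intro l ih h
  rw [reduced_iff] at h
  rw [red_node h.1]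
  congr 1
  conv_rhs => rw [← List.map_id l]
  exact List.map_congr_left fun t ht => ih t ht (h.2 t ht)

theorem deg_red : ∀ t, deg (red t) = deg t := by
  apply ind
  intro l ih
  by_cases h : l.length = 1
  · obtain ⟨t, rfl⟩ := List.length_eq_one_iff.1 h
    have := deg_pos t
    rw [red_single, ih t (by simp), deg_node]; simp; omega
  · rw [red_node h, deg_node, deg_node]
    congr 1
    simp only [degs, List.map_map]
    congr 1
    exact List.map_congr_left fun t ht => ih t ht

theorem eq_x_of_deg (t : PTree) (h : t.Reduced) (hd : t.deg = 1) : t = x := by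
  cases t with | node l =>
  rw [reduced_iff] at h
  have := length_le_degs l
  rw [deg_node] at hd
  have h0 : l.length = 0 := by have := h.1; omega
  rw [List.length_eq_zero_iff.1 h0]; rfl

theorem sub_node (l : List PTree) (I) : sub (node l) I = node (subList l I) := by rw [sub]

theorem subList_nil (I) : subList [] I = [] := by rw [subList]

theorem subList_cons (t : PTree) (l I) : subList (t :: l) I =
   (if (I.filter (· < t.deg)).Nonempty then [sub t (I.filter (· < t.deg))] else [])
        ++ subList l ((I.filter fun j => t.deg ≤ j).image fun j => j - t.deg) := by rw [subList]

theorem degs_subList (l : List PTree)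
    (ih : ∀ t ∈ l, ∀ I ⊆ Finset.range (deg t), I.Nonempty → deg (sub t I) = I.card) :
    ∀ I ⊆ Finset.range (degs l), degs (subList l I) = I.card := by
  induction l with
  | nil => intro I hI; simp at hI; subst hI; simp [subList_nil]
  | cons t l ihl =>
    intro I hI
    have e2 : ((I.filter fun j => t.deg ≤ j).image fun j => j - t.deg).card
        = (I.filter fun j => t.deg ≤ j).card := by
      apply Finset.card_image_of_injOn
      intro a ha b hb hab
      simp at ha hb hab; omega
    have e1 : degs (if (I.filter (· < t.deg)).Nonempty then [sub t (I.filter (· < t.deg))] else [])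
        = (I.filter (· < t.deg)).card := by
      split_ifs with h
      · simp only [degs_cons, degs_nil, add_zero]
        apply ih t (by simp) _ _ h
        intro j; simp
      · rw [Finset.not_nonempty_iff_eq_empty.1 h]; rfl
    rw [subList_cons, degs_append, e1, ihl (fun t ht => ih t (by simp [ht])), e2,
      ← Finset.card_filter_add_card_filter_not (s := I) (fun j => j < t.deg)]
    · simp
    · intro j hj
      simp at hj ⊢
      obtain ⟨a, ⟨ha, h1⟩, rfl⟩ := hj
      have := hI ha
      simp at this; omega

theorem deg_sub : ∀ t, ∀ I ⊆ Finset.range (deg t), I.Nonempty → deg (sub t I) = I.card := by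
  apply ind
  intro l ih I hI hne
  rw [sub_node]
  by_cases h : l = []
  · subst h
    rw [subList_nil]
    have : I = {0} := by
      change I ⊆ Finset.range (deg x) at hI
      rw [deg_x] at hI
      exact (Finset.subset_singleton_iff.1 hI).resolve_left hne.ne_empty
    subst this
    exact deg_x
  · rw [deg_node' h] at hI
    have e := degs_subList l ih I hI
    have := hne.card_pos
    rw [deg_node]; omega

theorem contract_eq_x (t : PTree) (I) (hI : I ⊆ Finset.range (deg t)) :
    contract t I = some x ↔ I.card = 1 := by
  rw [contract]
  split_ifs with h
  · subst h; simp
  · have hne := Finset.nonempty_iff_ne_empty.2 h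
    have e := deg_sub t I hI hne
    rw [← deg_red] at e
    simp only [Option.some.injEq]
    constructor
    · intro h; rw [h, deg_x] at e; exact e.symm
    · intro h; exact eq_x_of_deg _ (red_reduced _) (by omega)

theorem sub_full_list (l : List PTree) (ih : ∀ t ∈ l, sub t (Finset.range (deg t)) = t) :
    subList l (Finset.range (degs l)) = l := by
  induction l with
  | nil => rw [subList_nil]
  | cons t l ihl =>
    have hp := deg_pos t
    have e1 : (Finset.range (degs (t :: l))).filter (· < t.deg) = Finset.range t.deg := by
      ext j; simp; omega
    have e2 : (((Finset.range (degs (t :: l))).filter fun j => t.deg ≤ j).image fun j => j - t.deg)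
        = Finset.range (degs l) := by
      ext j; simp
      constructor
      · rintro ⟨a, h, rfl⟩; omega
      · intro h; exact ⟨j + t.deg, by omega, by omega⟩
    rw [subList_cons, e1, e2, ihl (fun t ht => ih t (by simp [ht])), if_pos, ih t (by simp)]
    · rfl
    · simp; omega

theorem sub_full : ∀ t, sub t (Finset.range (deg t)) = t := by
  apply ind
  intro l ih
  rw [sub_node]
  by_cases h : l = []
  · subst h; rw [subList_nil]
  · rw [deg_node' h, sub_full_list l ih]

/-- delete leaf `p` from each list -/
def dls (l : List PTree) (p : ℕ) : List PTree := (subList l ((Finset.range (degs l)).erase p)).map red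

def dl (t : PTree) (p : ℕ) : OT := contract t ((Finset.range (deg t)).erase p)

theorem deg_eq_one (t : PTree) (h : t.Reduced) : t.deg = 1 ↔ t = x :=
  ⟨eq_x_of_deg t h, fun h => h ▸ deg_x⟩

theorem dl_x (p : ℕ) (h : p < deg x) : dl x p = none := by
  rw [deg_x] at h
  have : p = 0 := by omega
  subst this
  rw [dl, deg_x, contract, if_pos]; rfl

theorem map_red {l : List PTree} (hl : ∀ t ∈ l, Reduced t) : l.map red = l := by
  conv_rhs => rw [← List.map_id l]
  exact List.map_congr_left fun t ht => red_eq t (hl t ht)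

theorem dls_cons_lt (t : PTree) (l : List PTree) (hl : ∀ t ∈ l, Reduced t) (p : ℕ)
    (hp : p < t.deg) : dls (t :: l) p = (dl t p).toList ++ l := by
  have e1 : ((Finset.range (degs (t :: l))).erase p).filter (· < t.deg)
      = (Finset.range t.deg).erase p := by
    ext j; simp; omega
  have e2 : ((((Finset.range (degs (t :: l))).erase p).filter
      fun j => t.deg ≤ j).image fun j => j - t.deg) = Finset.range (degs l) := by
    ext j; simp
    constructor
    · rintro ⟨a, h, rfl⟩; omega
    · intro h; exact ⟨j + t.deg, by omega, by omega⟩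
  rw [dls, subList_cons, e1, e2, sub_full_list l (fun t _ => sub_full t), dl, contract,
    List.map_append, map_red hl]
  congr 1
  by_cases h : (Finset.range t.deg).erase p = ∅
  · rw [if_pos h, if_neg (by simp [h])]; rfl
  · rw [if_neg h, if_pos (Finset.nonempty_iff_ne_empty.2 h)]; rfl

theorem dls_cons_ge (t : PTree) (l : List PTree) (ht : t.Reduced) (p : ℕ) :
    dls (t :: l) (t.deg + p) = t :: dls l p := by
  have hp := deg_pos t
  have e1 : ((Finset.range (degs (t :: l))).erase (t.deg + p)).filter (· < t.deg)
      = Finset.range t.deg := by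
    ext j; simp; omega
  have e2 : ((((Finset.range (degs (t :: l))).erase (t.deg + p)).filter
      fun j => t.deg ≤ j).image fun j => j - t.deg) = (Finset.range (degs l)).erase p := by
    ext j; simp
    constructor
    · rintro ⟨a, h, rfl⟩; omega
    · intro h; exact ⟨j + t.deg, by omega, by omega⟩
  rw [dls, subList_cons, e1, e2, sub_full, if_pos, dls, List.map_append]
  · simp [red_eq t ht]
  · simp; omega

open Classical in
noncomputable def D (t T : PTree) : ℕ := ∑ p ∈ Finset.range t.deg, if dl t p = some T then 1 else 0

open Classical in
noncomputable def E (m l : List PTree) : ℕ :=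
  ∑ p ∈ Finset.range (degs m), if dls m p = l then 1 else 0

theorem Ncount_eq (V T : PTree) : Ncount (some x) (some T) (some V) = D V T := by
  classical
  rw [Ncount, NFinset, D, ← Finset.card_filter]
  symm
  change _ = (Finset.filter (fun I => contract V I = some x ∧
    contract V (Finset.range V.deg \ I) = some T) (Finset.range V.deg).powerset).card
  apply Finset.card_bij (fun p _ => {p})
  · intro p hp
    simp only [Finset.mem_filter, Finset.mem_range, Finset.mem_powerset] at hp ⊢
    refine ⟨by simpa using hp.1, ?_, ?_⟩
    · rw [contract_eq_x _ _ (by simpa using hp.1)]; simp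
    · rw [← Finset.erase_eq]; exact hp.2
  · intro a _ b _ h; simpa using h
  · intro I hI
    simp only [Finset.mem_filter, Finset.mem_range, Finset.mem_powerset] at hI ⊢
    obtain ⟨h1, h2, h3⟩ := hI
    rw [contract_eq_x _ _ h1] at h2
    obtain ⟨p, rfl⟩ := Finset.card_eq_one.1 h2
    refine ⟨p, ⟨by simpa using h1, ?_⟩, rfl⟩
    rw [← Finset.erase_eq] at h3; exact h3

theorem D_x (T : PTree) : D x T = 0 := by
  classical
  rw [D]
  apply Finset.sum_eq_zero
  intro p hp
  rw [dl_x p (by simpa using hp)]; simp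

theorem E_nil (l : List PTree) : E [] l = 0 := by simp [E]

open Classical in
theorem E_cons (t : PTree) (ts l : List PTree) (ht : t.Reduced) (hts : ∀ t ∈ ts, Reduced t) :
    E (t :: ts) l = (∑ p ∈ Finset.range t.deg, if (dl t p).toList ++ ts = l then 1 else 0)
      + ∑ p ∈ Finset.range (degs ts), if t :: dls ts p = l then 1 else 0 := by
  rw [E, degs_cons, Finset.sum_range_add]
  congr 1
  · apply Finset.sum_congr rfl
    intro p hp
    rw [dls_cons_lt t ts hts p (by simpa using hp)]
  · apply Finset.sum_congr rfl
    intro p hp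
    rw [dls_cons_ge t ts ht p]

theorem dl_ne_none (t : PTree) (ht : t.Reduced) (hx : t ≠ x) (p : ℕ) : dl t p ≠ none := by
  have h1 := deg_pos t
  have h2 : t.deg ≠ 1 := fun h => hx (eq_x_of_deg t ht h)
  rw [dl, contract, if_neg]
  · simp
  · intro h
    have := Finset.pred_card_le_card_erase (s := Finset.range t.deg) (a := p)
    rw [h] at this
    simp at this; omega

open Classical in
theorem E_cons_nil (t : PTree) (ts : List PTree) (ht : t.Reduced) (hts : ∀ t ∈ ts, Reduced t) :
    E (t :: ts) [] = if t = x ∧ ts = [] then 1 else 0 := by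
  rw [E_cons t ts _ ht hts]
  simp only [reduceCtorEq, if_false, Finset.sum_const_zero, add_zero, List.append_eq_nil_iff,
    Option.toList_eq_nil_iff]
  by_cases h : t = x
  · subst h
    rw [deg_x, Finset.sum_range_one, dl_x 0 (by simp [deg_x])]
    simp
  · simp [h, dl_ne_none t ht h]

open Classical in
theorem E_cons_cons (t t' : PTree) (ts l : List PTree) (ht : t.Reduced)
    (hts : ∀ t ∈ ts, Reduced t) :
    E (t :: ts) (t' :: l) = (if t = x ∧ ts = t' :: l then 1 else 0)
      + (if ts = l then D t t' else 0) + (if t = t' then E ts l else 0) := by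
  rw [E_cons t ts _ ht hts]
  congr 1
  · by_cases h : t = x
    · subst h
      rw [D_x, deg_x, Finset.sum_range_one, dl_x 0 (by simp [deg_x])]
      simp only [Option.toList_none, List.nil_append, true_and, ite_self, add_zero]
      congr
    · simp only [h, false_and, if_false, zero_add]
      by_cases h2 : ts = l
      · rw [if_pos h2, D]
        apply Finset.sum_congr rfl
        intro p _
        obtain ⟨s, hs⟩ := Option.ne_none_iff_exists'.1 (dl_ne_none t ht h p)
        simp [hs, h2]
      · rw [if_neg h2]
        apply Finset.sum_eq_zero
        intro p _
        obtain ⟨s, hs⟩ := Option.ne_none_iff_exists'.1 (dl_ne_none t ht h p)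
        simp [hs, h2]
  · by_cases h : t = t'
    · simp [h, E]
    · simp [h]

theorem D_node (m l : List PTree) (hm : (node m).Reduced) (hl : l.length ≠ 1) :
    D (node m) (node l) = E m l + E m [node l] := by
  classical
  by_cases h0 : m = []
  · subst h0; rw [E_nil, E_nil]; exact D_x _
  rw [D, E, E, ← Finset.sum_add_distrib, deg_node' h0]
  have hm' := (reduced_iff m).1 hm
  have hd := length_le_degs m
  have h0' := List.length_pos_iff.2 h0
  apply Finset.sum_congr rfl
  intro p hp
  have hne : ¬ (Finset.range (degs m)).erase p = ∅ := by
    intro h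
    have := Finset.pred_card_le_card_erase (s := Finset.range (degs m)) (a := p)
    rw [h] at this
    simp at this; omega
  rw [dl, contract, deg_node' h0, if_neg hne, sub_node, dls]
  · generalize subList m ((Finset.range (degs m)).erase p) = s
    by_cases hs : s.length = 1
    · obtain ⟨t, rfl⟩ := List.length_eq_one_iff.1 hs
      have : ¬ [red t] = l := by rintro rfl; simp at hl
      simp [red_single, this]
    · have : ¬ s.map red = [node l] := by
        intro h; apply hs; simpa using congrArg List.length h
      simp [red_node hs, this]

open Classical in
theorem E_single (m : List PTree) (T : PTree) (hm : (node m).Reduced) :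
    E m [T] = (if m = [x, T] then 1 else 0) + if m = [T, x] then 1 else 0 := by
  obtain ⟨h1, h2⟩ := (reduced_iff m).1 hm
  match m, h1, h2 with
  | [], _, _ => simp [E_nil]
  | [t], h1, _ => simp at h1
  | t :: s :: r, _, h2 =>
    rw [E_cons_cons t T _ _ (h2 t (by simp)) (fun u hu => h2 u (List.mem_cons_of_mem _ hu)),
      E_cons_nil s r (h2 s (by simp))
        (fun u hu => h2 u (List.mem_cons_of_mem _ (List.mem_cons_of_mem _ hu)))]
    simp [← ite_and]

theorem E_ne_zero (l : List PTree) : ∀ m : List PTree, (∀ t ∈ m, Reduced t) → E m l ≠ 0 →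
    (∃ i ≤ l.length, m = l.insertIdx i x) ∨
      ∃ l1 t t' l2, l = l1 ++ t' :: l2 ∧ m = l1 ++ t :: l2 ∧ t.Reduced ∧ D t t' ≠ 0 := by
  classical
  induction l with
  | nil =>
    intro m hm h
    cases m with
    | nil => simp [E_nil] at h
    | cons t ts =>
      rw [E_cons_nil _ _ (hm t (by simp)) (fun u hu => hm u (List.mem_cons_of_mem _ hu))] at h
      left
      refine ⟨0, le_rfl, ?_⟩
      simp at h ⊢; exact h
  | cons t' l ih =>
    intro m hm h
    cases m with
    | nil => simp [E_nil] at h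
    | cons t ts =>
      have hts := (fun u hu => hm u (List.mem_cons_of_mem _ hu) : ∀ u ∈ ts, Reduced u)
      rw [E_cons_cons _ _ _ _ (hm t (by simp)) hts] at h
      by_cases c1 : t = x ∧ ts = t' :: l
      · left; exact ⟨0, by simp, by simp [c1]⟩
      by_cases c2 : ts = l ∧ D t t' ≠ 0
      · right; exact ⟨[], t, t', l, rfl, by simp [c2.1], hm t (by simp), c2.2⟩
      by_cases c3 : t = t' ∧ E ts l ≠ 0
      · obtain ⟨rfl, h3⟩ := c3
        rcases ih ts hts h3 with ⟨i, hi, rfl⟩ | ⟨l1, a, b, l2, rfl, rfl, h5⟩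
        · left; exact ⟨i + 1, by simpa using hi, by simp⟩
        · right; exact ⟨t :: l1, a, b, l2, rfl, rfl, h5⟩
      exfalso; apply h
      rw [if_neg c1]
      push Not at c2 c3
      simp; exact ⟨c2, c3⟩

theorem finite_D : ∀ T : PTree, T.Reduced → {V : PTree | V.Reduced ∧ D V T ≠ 0}.Finite := by
  classical
  refine ind ?_
  intro l ih hT
  obtain ⟨h1, h2⟩ := (reduced_iff l).1 hT
  have f1 : (⋃ i ∈ Finset.range (l.length + 1), {node (l.insertIdx i x)} : Set PTree).Finite :=
    Set.Finite.biUnion (Finset.finite_toSet _) (fun _ _ => Set.finite_singleton _)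
  have f2 : (⋃ i : Fin l.length, (fun t => node (l.set i t)) ''
      {V : PTree | V.Reduced ∧ D V (l.get i) ≠ 0} : Set PTree).Finite :=
    Set.finite_iUnion fun i => (ih _ (List.get_mem _ _) (h2 _ (List.get_mem _ _))).image _
  refine ((f1.union f2).union
    (Set.toFinite {node [x, node l], node [node l, x]})).subset ?_
  rintro ⟨m⟩ ⟨hm, hD⟩
  rw [D_node m l hm h1] at hD
  by_cases hE : E m l = 0
  · right
    rw [hE, E_single m _ hm] at hD
    simp
    by_contra hc
    push Not at hc
    simp [hc] at hD
  · left
    rcases E_ne_zero l m ((reduced_iff m).1 hm).2 hE with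
      ⟨i, hi, rfl⟩ | ⟨l1, t, t', l2, rfl, rfl, h3, h4⟩
    · left; simp; exact ⟨i, by omega, rfl⟩
    · right
      simp only [Set.mem_iUnion]
      refine ⟨⟨l1.length, by simp⟩, t, ⟨h3, by simpa using h4⟩, by simp⟩

end PTree

open PTree

open Classical in
theorem shuffleM_apply (K : Type) [Field K] (T : PTree) (hT : T.Reduced) (V : OT) :
    shuffleM K (some x) (some T) V
      = match V with
        | none => 0
        | some v => if v.Reduced then (D v T : K) else 0 := by
  have hnone : Ncount (some x) (some T) none = 0 := by
    simp [Ncount, NFinset, contractO]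
  have key : ∀ V : OT, (∑ᶠ (_ : ROT V), Finsupp.single V ((Ncount (some x) (some T) V : K)))
      = Finsupp.single V (match V with
        | none => (0 : K)
        | some v => if v.Reduced then (D v T : K) else 0) := by
    intro V
    rw [finsum_eq_if]
    cases V with
    | none => simp [hnone]
    | some v =>
      have : ROT (some v) ↔ v.Reduced := by simp [ROT]
      simp only [this, Ncount_eq]
      split_ifs <;> simp
  rw [shuffleM]
  simp only [key]
  have hfin : (Function.support fun V : OT => (Finsupp.single V (match V with
        | none => (0 : K)
        | some v => if v.Reduced then (D v T : K) else 0))).Finite := by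
    refine ((finite_D T hT).image some).subset ?_
    rintro (_ | v) h
    · simp at h
    · simp at h
      refine ⟨v, ⟨h.1, ?_⟩, rfl⟩
      intro h0; apply h.2; simp [h0]
  rw [finsum_eq_sum _ hfin, Finsupp.finsetSum_apply]
  rw [Finset.sum_eq_single V]
  · simp
  · intro b _ hb; simp [Finsupp.single_apply, hb]
  · intro h
    simpa using h

/-- product of coefficients -/
noncomputable def pc (K : Type) [Field K] : List (AMod K) → List PTree → K
  | [], [] => 1
  | f :: fs, t :: ts => f (some t) * pc K fs ts
  | _, _ => 0

theorem listProd_apply (K : Type) [Field K] (fs : List (AMod K)) :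
    ∀ m : List PTree, listProd K fs (m.map some) = pc K fs m := by
  classical
  induction fs with
  | nil => intro m; cases m <;> simp [listProd, pc]
  | cons f fs ih =>
    intro m
    rw [listProd]
    cases m with
    | nil => simp [pc, Finsupp.sum, Finsupp.finsetSum_apply]
    | cons t ts =>
      rw [pc, ← ih]
      simp only [Finsupp.sum, Finsupp.finsetSum_apply, Finsupp.single_apply, List.map_cons,
        List.cons.injEq]
      rw [Finset.sum_eq_single (some t), Finset.sum_eq_single (ts.map some)]
      · simp
      · intro b _ hb; simp [hb]
      · intro h; simp at h; simp [h]
      · intro b _ hb; simp [hb]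
      · intro h; simp at h; simp [h]

theorem mapM_id_eq (ts : List OT) (l : List PTree) :
    (ts.mapM (id : Option PTree → Option PTree) : Option (List PTree)) = some l ↔
      ts = l.map some := by
  induction ts generalizing l with
  | nil => cases l <;> simp
  | cons a ts ih =>
    cases a with
    | none => cases l <;> simp
    | some a =>
      rw [List.mapM_cons]
      cases h : (ts.mapM (id : Option PTree → Option PTree) : Option (List PTree)) with
      | none =>
        cases l with
        | nil => simp
        | cons b l =>
          have := (ih l).not.1 (by rw [h]; simp)
          simp [this]
      | some l' =>
        have h' := (ih l').1 h
        cases l with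
        | nil => simp
        | cons b l =>
          subst h'
          simp [List.map_inj_right]

theorem nodeF_none (K : Type) [Field K] (fs : List (AMod K)) : nodeF K fs none = 0 := by
  rw [nodeF, Finsupp.sum, Finsupp.finsetSum_apply]
  apply Finset.sum_eq_zero
  intro ts _
  split <;> simp

theorem nodeF_apply (K : Type) [Field K] (fs : List (AMod K)) (m : List PTree) :
    nodeF K fs (some (node m)) = pc K fs m := by
  classical
  rw [nodeF, Finsupp.sum, Finsupp.finsetSum_apply, ← listProd_apply,
    Finset.sum_eq_single (m.map some)]
  · rw [(mapM_id_eq _ m).2 rfl]; simp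
  · intro ts _ hts
    split
    · next l' h =>
      rw [mapM_id_eq] at h
      have : l' ≠ m := by rintro rfl; exact hts h
      simp [Finsupp.single_apply, this]
    · simp
  · intro h
    simp at h
    rw [(mapM_id_eq _ m).2 rfl]; simp [h]

open Classical in
/-- coefficient at `m` of the two sums of list insertions -/
noncomputable def RS (K : Type) [Field K] (l m : List PTree) : K :=
  (∑ i ∈ Finset.range (l.length + 1), if l.insertIdx i x = m then 1 else 0)
  + ∑ i ∈ Finset.range l.length, pc K (l.mapIdx fun j t =>
              if j = i then shuffleM K (some PTree.x) (some t)
              else Finsupp.single (some t) 1) m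

open Classical in
theorem pc_single (K : Type) [Field K] (l m : List PTree) :
    pc K (l.map fun t => Finsupp.single (some t) 1) m = if l = m then 1 else 0 := by
  induction l generalizing m with
  | nil => cases m <;> simp [pc]
  | cons a l ih =>
    cases m with
    | nil => simp [pc]
    | cons b m => simp [pc, ih, Finsupp.single_apply, ← ite_and, and_comm]

theorem RS_nil (K : Type) [Field K] (l : List PTree) : RS K l [] = 0 := by
  classical
  rw [RS]
  have h1 : ∀ i ∈ Finset.range (l.length + 1), (if l.insertIdx i x = [] then (1 : K) else 0) = 0 := by
    intro i hi
    rw [if_neg]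
    intro h
    have := congrArg List.length h
    rw [List.length_insertIdx_of_le_length (by simp at hi; omega)] at this
    simp at this
  rw [Finset.sum_eq_zero h1, zero_add]
  apply Finset.sum_eq_zero
  intro i hi
  cases l with
  | nil => simp at hi
  | cons a l => simp [List.mapIdx_cons, pc]

open Classical in
theorem RS_nil_left (K : Type) [Field K] (m : List PTree) :
    RS K [] m = if m = [x] then 1 else 0 := by
  rw [RS, List.length_nil, zero_add, Finset.sum_range_one]
  simp [eq_comm]

open Classical in
theorem RS_cons (K : Type) [Field K] (t t' : PTree) (l ts : List PTree) :
    RS K (t' :: l) (t :: ts) = (if t = x ∧ ts = t' :: l then 1 else 0)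
      + (if ts = l then shuffleM K (some x) (some t') (some t) else 0)
      + (if t = t' then RS K l ts else 0) := by
  have h1 : (l.mapIdx fun j t => if j + 1 = 0 then shuffleM K (some PTree.x) (some t)
              else Finsupp.single (some t) 1) = l.map fun t => Finsupp.single (some t) 1 := by
    simp [List.mapIdx_eq_zipIdx_map]
    apply List.ext_getElem <;> simp
  have h2 : (∑ i ∈ Finset.range ((t' :: l).length + 1),
      if (t' :: l).insertIdx i x = t :: ts then (1 : K) else 0)
      = (if t = t' then ∑ i ∈ Finset.range (l.length + 1),
          if l.insertIdx i x = ts then (1 : K) else 0 else 0)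
        + if t = x ∧ ts = t' :: l then 1 else 0 := by
    rw [List.length_cons, Finset.sum_range_succ']
    congr 1
    · by_cases e : t = t'
      · subst e
        simp only [List.insertIdx_succ_cons, List.cons.injEq, true_and, if_true]
      · simp only [List.insertIdx_succ_cons, List.cons.injEq, Ne.symm e, false_and, if_false, e,
          Finset.sum_const_zero]
    · simp [eq_comm]
  have h3 : (∑ i ∈ Finset.range (t' :: l).length, pc K ((t' :: l).mapIdx fun j t =>
              if j = i then shuffleM K (some PTree.x) (some t)
              else Finsupp.single (some t) 1) (t :: ts))
      = (if t = t' then ∑ i ∈ Finset.range l.length, pc K (l.mapIdx fun j t =>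
              if j = i then shuffleM K (some PTree.x) (some t)
              else Finsupp.single (some t) 1) ts else 0)
        + if ts = l then shuffleM K (some x) (some t') (some t) else 0 := by
    rw [List.length_cons, Finset.sum_range_succ']
    simp only [List.mapIdx_cons, pc, h1, pc_single, Nat.add_right_cancel_iff]
    congr 1
    · by_cases e : t = t'
      · subst e
        simp
      · simp [e, Ne.symm e, Finsupp.single_apply]
    · simp [eq_comm]
  rw [RS, h2, h3, RS]
  split_ifs <;> ring

theorem RS_eq (K : Type) [Field K] (l : List PTree) (hl : ∀ t ∈ l, Reduced t) :
    ∀ m, (∀ t ∈ m, Reduced t) → RS K l m = E m l := by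
  classical
  induction l with
  | nil =>
    intro m hm
    rw [RS_nil_left]
    cases m with
    | nil => simp [E_nil]
    | cons t ts =>
      rw [E_cons_nil _ _ (hm t (by simp)) (fun u hu => hm u (List.mem_cons_of_mem _ hu))]
      simp
  | cons t' l ih =>
    intro m hm
    cases m with
    | nil => simp [E_nil, RS_nil]
    | cons t ts =>
      have hts := (fun u hu => hm u (List.mem_cons_of_mem _ hu) : ∀ u ∈ ts, Reduced u)
      rw [E_cons_cons _ _ _ _ (hm t (by simp)) hts, RS_cons,
        ih (fun u hu => hl u (List.mem_cons_of_mem _ hu)) ts hts,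
        shuffleM_apply K t' (hl t' (by simp))]
      simp [hm t (by simp)]

theorem x_reduced : x.Reduced := by rw [x, reduced_iff]; simp

theorem RS_ne_zero (K : Type) [Field K] (l : List PTree) (hl : ∀ t ∈ l, Reduced t) :
    ∀ m, RS K l m ≠ 0 → (∀ t ∈ m, Reduced t) ∧ l.length ≤ m.length := by
  classical
  induction l with
  | nil =>
    intro m hm
    rw [RS_nil_left] at hm
    have : m = [x] := by by_contra h; simp [h] at hm
    subst this
    simp [x_reduced]
  | cons t' l ih =>
    intro m hm
    have hl' := (fun u hu => hl u (List.mem_cons_of_mem _ hu) : ∀ u ∈ l, Reduced u)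
    cases m with
    | nil => simp [RS_nil] at hm
    | cons t ts =>
      rw [RS_cons, shuffleM_apply K t' (hl t' (by simp))] at hm
      by_cases c1 : t = x ∧ ts = t' :: l
      · obtain ⟨rfl, rfl⟩ := c1
        simp only [List.mem_cons, forall_eq_or_imp, List.length_cons]
        exact ⟨⟨x_reduced, hl t' (by simp), hl'⟩, by omega⟩
      by_cases c2 : ts = l ∧ t.Reduced
      · obtain ⟨rfl, h⟩ := c2
        simp only [List.mem_cons, forall_eq_or_imp, List.length_cons]
        exact ⟨⟨h, hl'⟩, by omega⟩
      by_cases c3 : t = t' ∧ RS K l ts ≠ 0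
      · obtain ⟨rfl, h⟩ := c3
        have := ih hl' ts h
        simp only [List.mem_cons, forall_eq_or_imp, List.length_cons]
        exact ⟨⟨hl t (by simp), this.1⟩, by omega⟩
      exfalso; apply hm
      rw [if_neg c1]
      push Not at c2 c3
      have e2 : (if ts = l then (if t.Reduced then (D t t' : K) else 0) else 0) = 0 := by
        split_ifs with a b
        · exact absurd b (c2 a)
        · rfl
        · rfl
      have e3 : (if t = t' then RS K l ts else 0) = 0 := by
        split_ifs with a
        · exact c3 a
        · rfl
      simp only [e3, add_zero, zero_add]
      exact e2

/-- For a finite planar reduced rooted tree `T = node [T_1,…,T_n]` of arity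
`n ≥ 2`:  `x ⧢ T = x·T + T·x + Σ_{i=1}^{n+1} node [T_1,…,T_{i−1}, x, T_i,…,T_n]
+ Σ_{i=1}^{n} node [T_1,…,T_{i−1}, x ⧢ T_i, T_{i+1},…,T_n]`. -/
theorem shuffle_x_tree (K : Type) [Field K] (lt : List PTree) (hn : 2 ≤ lt.length)
    (hT : (PTree.node lt).Reduced) :
    shuffleM K (some PTree.x) (some (PTree.node lt))
      = Finsupp.single (some (PTree.node [PTree.x, PTree.node lt])) 1
        + Finsupp.single (some (PTree.node [PTree.node lt, PTree.x])) 1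
        + ∑ i ∈ Finset.range (lt.length + 1),
            Finsupp.single (some (PTree.node (lt.insertIdx i PTree.x))) 1
        + ∑ i ∈ Finset.range lt.length,
            nodeF K (lt.mapIdx fun j t =>
              if j = i then shuffleM K (some PTree.x) (some t)
              else Finsupp.single (some t) 1) := by
  classical
  obtain ⟨h1, h2⟩ := (reduced_iff lt).1 hT
  ext V
  rw [shuffleM_apply K _ hT]
  simp only [Finsupp.add_apply, Finsupp.finsetSum_apply]
  cases V with
  | none => simp [nodeF_none]
  | some v =>
    obtain ⟨m⟩ := v
    simp only [nodeF_apply, Finsupp.single_apply, Option.some.injEq, node.injEq]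
    rw [add_assoc]
    change _ = _ + RS K lt m
    by_cases hm : (node m).Reduced
    · rw [if_pos hm, D_node m lt hm h1, E_single m _ hm,
        RS_eq K lt h2 m ((reduced_iff m).1 hm).2]
      push_cast
      rw [add_comm]
      simp [eq_comm]
    · rw [if_neg hm]
      have e1 : ¬ [x, node lt] = m := by
        rintro rfl; apply hm; rw [reduced_iff]; simp [x_reduced, hT]
      have e2 : ¬ [node lt, x] = m := by
        rintro rfl; apply hm; rw [reduced_iff]; simp [x_reduced, hT]
      have e3 : RS K lt m = 0 := by
        by_contra h
        have := RS_ne_zero K lt h2 m h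
        apply hm; rw [reduced_iff]; exact ⟨by omega, this.1⟩
      simp [e1, e2, e3]
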